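/- Let p > 3 and h ∈ (1, p−1). For every c > 0 there exists L₀ ≥ 1 such that for all L ≥ L₀ and all m ≥ 1: ∫_0^{m−1} ∫_{−β}^{β} (L + β − α)^{1−p} ⟨α⟩^{−h} (cosh(m−β))^{−1/2} dα dβ ≤ c ⟨m⟩^{−h}. -/

import Mathlib

open MeasureTheory intervalIntegral

/-- The Japanese bracket `⟨x⟩ = (1 + x²)^{1/2}`. -/
noncomputable def jap (x : ℝ) : ℝ := Real.sqrt (1 + x ^ 2)

lemma one_le_jap (x : ℝ) : 1 ≤ jap x :=
  Real.one_le_sqrt.2 (by nlinarith [sq_nonneg x])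

lemma jap_pos (x : ℝ) : 0 < jap x := one_pos.trans_le (one_le_jap x)

lemma jap_le_one_add_abs (x : ℝ) : jap x ≤ 1 + |x| :=
  Real.sqrt_le_iff.2 ⟨by positivity, by nlinarith [sq_abs x, abs_nonneg x]⟩

lemma abs_le_jap (x : ℝ) : |x| ≤ jap x :=
  Real.abs_le_sqrt (by linarith)

lemma jap_le_jap_sub_add_jap (b a : ℝ) : jap b ≤ jap (b - a) + jap a := by
  have hsub : jap (b - a) ^ 2 = 1 + (b - a) ^ 2 := Real.sq_sqrt (by positivity)
  have ha : jap a ^ 2 = 1 + a ^ 2 := Real.sq_sqrt (by positivity)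
  have hmul : (b - a) * a ≤ jap (b - a) * jap a := by
    calc (b - a) * a ≤ |b - a| * |a| := by rw [← abs_mul]; exact le_abs_self _
      _ ≤ jap (b - a) * jap a :=
        mul_le_mul (abs_le_jap _) (abs_le_jap _) (abs_nonneg _) (jap_pos _).le
  exact Real.sqrt_le_iff.2
    ⟨(add_pos (jap_pos _) (jap_pos _)).le, by nlinarith⟩

lemma continuous_jap_rpow (s : ℝ) : Continuous fun x => jap x ^ s := by
  have hc : Continuous jap := by unfold jap; fun_prop
  exact hc.rpow_const fun x => Or.inl (jap_pos x).ne'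

lemma integrable_jap_rpow_neg {h : ℝ} (hh : 1 < h) : Integrable fun x => jap x ^ (-h) := by
  have hi := integrable_rpow_neg_one_add_norm_sq (E := ℝ) (μ := volume) (r := h) (by simpa using hh)
  refine hi.congr (Filter.Eventually.of_forall fun x => ?_)
  simp only [jap, Real.norm_eq_abs, sq_abs]
  rw [Real.sqrt_eq_rpow, ← Real.rpow_mul (by positivity)]
  ring_nf

/-- If `x ≤ y + z`, then one of `y, z` is at least `x / 2`. -/
lemma rpow_neg_mul_rpow_neg_le {x y z h : ℝ} (hx : 0 < x) (hy : 0 < y) (hz : 0 < z)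
    (hh : 0 ≤ h) (hxyz : x ≤ y + z) :
    y ^ (-h) * z ^ (-h) ≤ 2 ^ h * x ^ (-h) * (y ^ (-h) + z ^ (-h)) := by
  have key : ∀ w, x / 2 ≤ w → w ^ (-h) ≤ 2 ^ h * x ^ (-h) := fun w hw => by
    calc w ^ (-h) ≤ (x / 2) ^ (-h) :=
          Real.rpow_le_rpow_of_nonpos (by positivity) hw (by linarith)
      _ = 2 ^ h * x ^ (-h) := by
          rw [Real.div_rpow hx.le zero_le_two, Real.rpow_neg zero_le_two, div_inv_eq_mul, mul_comm]
  have hY : 0 ≤ y ^ (-h) := by positivity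
  have hZ : 0 ≤ z ^ (-h) := by positivity
  have hX : 0 ≤ 2 ^ h * x ^ (-h) := by positivity
  rcases le_total y z with hyz | hyz
  · nlinarith [mul_le_mul_of_nonneg_left (key z (by linarith)) hY, mul_nonneg hX hZ]
  · nlinarith [mul_le_mul_of_nonneg_right (key y (by linarith)) hZ, mul_nonneg hX hY]

/-- The convolution of `⟨·⟩^{-h}` with itself is bounded by a multiple of `⟨·⟩^{-h}`. -/
lemma exists_integral_jap_conv_le {h : ℝ} (hh : 1 < h) :
    ∃ K : ℝ, 0 < K ∧ ∀ b u v : ℝ, u ≤ v →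
      (∫ a in u..v, jap (b - a) ^ (-h) * jap a ^ (-h)) ≤ K * jap b ^ (-h) := by
  set J : ℝ := ∫ x, jap x ^ (-h)
  have hi := integrable_jap_rpow_neg hh
  have hnn : ∀ x, 0 ≤ jap x ^ (-h) := fun x => Real.rpow_nonneg (jap_pos x).le _
  have hJ : 0 ≤ J := integral_nonneg hnn
  refine ⟨2 ^ h * (2 * J + 1), by positivity, fun b u v huv => ?_⟩
  have hg : Integrable fun a => jap (b - a) ^ (-h) + jap a ^ (-h) :=
    (hi.comp_sub_left b).add hi
  have hgJ : ∫ a, (jap (b - a) ^ (-h) + jap a ^ (-h)) = 2 * J := by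
    rw [integral_add (hi.comp_sub_left b) hi,
      integral_sub_left_eq_self (fun x => jap x ^ (-h)) volume b]
    ring
  rw [integral_of_le huv]
  calc ∫ a in Set.Ioc u v, jap (b - a) ^ (-h) * jap a ^ (-h)
      ≤ ∫ a in Set.Ioc u v, 2 ^ h * jap b ^ (-h) * (jap (b - a) ^ (-h) + jap a ^ (-h)) := by
        refine integral_mono_of_nonneg
          (Filter.Eventually.of_forall fun a => mul_nonneg (hnn _) (hnn _))
          (hg.const_mul _).integrableOn (Filter.Eventually.of_forall fun a => ?_)
        exact rpow_neg_mul_rpow_neg_le (jap_pos _) (jap_pos _) (jap_pos _) (by linarith)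
          (jap_le_jap_sub_add_jap b a)
    _ ≤ ∫ a, 2 ^ h * jap b ^ (-h) * (jap (b - a) ^ (-h) + jap a ^ (-h)) :=
        setIntegral_le_integral (hg.const_mul _) (Filter.Eventually.of_forall fun a =>
          mul_nonneg (mul_nonneg (by positivity) (hnn _)) (add_nonneg (hnn _) (hnn _)))
    _ = 2 ^ h * jap b ^ (-h) * (2 * J) := by rw [MeasureTheory.integral_const_mul, hgJ]
    _ ≤ 2 ^ h * (2 * J + 1) * jap b ^ (-h) := by
        nlinarith [mul_nonneg (Real.rpow_nonneg zero_le_two h) (hnn b)]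

/-- The weight `(cosh x)^{-1/2}` decays faster than any power of `⟨x⟩`. -/
lemma cosh_rpow_neg_half_le {h : ℝ} (hh : 1 < h) (x : ℝ) :
    Real.cosh x ^ (-(1 / 2) : ℝ) ≤ (2 ^ (1 / 2 : ℝ) * (2 * h) ^ h) * jap x ^ (-h) := by
  have hj := jap_pos x
  have hexp : jap x / (2 * h) ≤ Real.exp (|x| / (2 * h)) := by
    refine le_trans ?_ (Real.add_one_le_exp _)
    rw [div_le_iff₀ (by linarith), add_mul, div_mul_cancel₀ _ (by linarith)]
    linarith [jap_le_one_add_abs x]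
  have hcosh : Real.exp |x| / 2 ≤ Real.cosh x := by
    rw [← Real.cosh_abs, Real.cosh_eq]
    linarith [Real.exp_pos (-|x|)]
  have hlow : (jap x / (2 * h)) ^ (2 * h) / 2 ≤ Real.cosh x := by
    refine le_trans (div_le_div_of_nonneg_right ?_ zero_le_two) hcosh
    calc (jap x / (2 * h)) ^ (2 * h) ≤ Real.exp (|x| / (2 * h)) ^ (2 * h) :=
          Real.rpow_le_rpow (by positivity) hexp (by linarith)
      _ = Real.exp |x| := by
          rw [← Real.exp_mul, div_mul_cancel₀ _ (by linarith)]
  calc Real.cosh x ^ (-(1 / 2) : ℝ)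
      ≤ ((jap x / (2 * h)) ^ (2 * h) / 2) ^ (-(1 / 2) : ℝ) :=
        Real.rpow_le_rpow_of_nonpos (by positivity) hlow (by norm_num)
    _ = (2 ^ (1 / 2 : ℝ) * (2 * h) ^ h) * jap x ^ (-h) := by
        rw [Real.div_rpow (by positivity) zero_le_two, ← Real.rpow_mul (by positivity),
          show 2 * h * -(1 / 2) = -h by ring, Real.div_rpow hj.le (by linarith),
          Real.rpow_neg zero_le_two, Real.rpow_neg (by linarith : (0 : ℝ) ≤ 2 * h),
          div_inv_eq_mul, div_inv_eq_mul]
        ring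

lemma add_rpow_le_rpow_mul_jap_rpow {L x q h : ℝ} (hL : 1 ≤ L) (hx : 0 ≤ x) (hh : 0 ≤ h)
    (hq : h ≤ q) : (L + x) ^ (-q) ≤ L ^ (-(q - h)) * jap x ^ (-h) := by
  have hjap : jap x ≤ L + x := by
    have := jap_le_one_add_abs x
    rw [abs_of_nonneg hx] at this
    linarith
  calc (L + x) ^ (-q) = (L + x) ^ (-(q - h)) * (L + x) ^ (-h) := by
        rw [← Real.rpow_add (by linarith)]; ring_nf
    _ ≤ L ^ (-(q - h)) * jap x ^ (-h) :=
        mul_le_mul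
          (Real.rpow_le_rpow_of_nonpos (by linarith) (by linarith) (by linarith))
          (Real.rpow_le_rpow_of_nonpos (jap_pos x) hjap (by linarith))
          (by positivity) (by positivity)

theorem interior_region_estimate_one (p h : ℝ) (hp : 3 < p) (hh1 : 1 < h) (hh2 : h < p - 1) :
    ∀ c : ℝ, 0 < c → ∃ L₀ : ℝ, 1 ≤ L₀ ∧ ∀ L : ℝ, L₀ ≤ L → ∀ m : ℝ, 1 ≤ m →
      (∫ β in (0 : ℝ)..(m - 1), ∫ α in (-β)..β,
        (L + β - α) ^ (1 - p) * jap α ^ (-h) * Real.cosh (m - β) ^ (-(1 / 2) : ℝ))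
      ≤ c * jap m ^ (-h) := by
  intro c hc
  obtain ⟨K, hK, hconv⟩ := exists_integral_jap_conv_le hh1
  obtain ⟨C, hC, hcosh⟩ : ∃ C : ℝ, 0 < C ∧
      ∀ x, Real.cosh x ^ (-(1 / 2) : ℝ) ≤ C * jap x ^ (-h) :=
    ⟨_, by positivity, cosh_rpow_neg_half_le hh1⟩
  have hnn : ∀ x, 0 ≤ jap x ^ (-h) := fun x => Real.rpow_nonneg (jap_pos x).le _
  have hsmall : ∀ᶠ L : ℝ in Filter.atTop, L ^ (-(p - 1 - h)) < c / (C * K * K) :=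
    (tendsto_rpow_neg_atTop (by linarith)).eventually_lt_const (by positivity)
  obtain ⟨L₁, hL₁⟩ := Filter.eventually_atTop.1 hsmall
  refine ⟨max 1 L₁, le_max_left _ _, fun L hL m hm => ?_⟩
  have hL1 : 1 ≤ L := (le_max_left _ _).trans hL
  set ε : ℝ := L ^ (-(p - 1 - h))
  have hε : 0 ≤ ε := by positivity
  have hεc : ε * (C * K * K) ≤ c :=
    ((lt_div_iff₀ (by positivity)).1 (hL₁ L ((le_max_right _ _).trans hL))).le
  have hcont : ∀ b : ℝ, Continuous fun a => jap (b - a) ^ (-h) * jap a ^ (-h) := fun b =>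
    ((continuous_jap_rpow (-h)).comp (continuous_const.sub continuous_id)).mul
      (continuous_jap_rpow (-h))
  have hpos : ∀ β, 0 ≤ β → ∀ α ∈ Set.Ioc (-β) β,
      0 ≤ (L + β - α) ^ (1 - p) * jap α ^ (-h) * Real.cosh (m - β) ^ (-(1 / 2) : ℝ) :=
    fun β _ α hα => mul_nonneg
      (mul_nonneg (Real.rpow_nonneg (by linarith [hα.2]) _) (hnn _))
      (Real.rpow_nonneg (Real.cosh_pos _).le _)
  have hinner : ∀ β, 0 ≤ β → (∫ α in (-β)..β,
      (L + β - α) ^ (1 - p) * jap α ^ (-h) * Real.cosh (m - β) ^ (-(1 / 2) : ℝ))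
      ≤ ε * C * K * (jap (m - β) ^ (-h) * jap β ^ (-h)) := by
    intro β hβ
    calc (∫ α in (-β)..β,
        (L + β - α) ^ (1 - p) * jap α ^ (-h) * Real.cosh (m - β) ^ (-(1 / 2) : ℝ))
        ≤ ∫ α in (-β)..β,
            ε * C * jap (m - β) ^ (-h) * (jap (β - α) ^ (-h) * jap α ^ (-h)) := by
          rw [integral_of_le (by linarith), integral_of_le (by linarith)]
          refine integral_mono_of_nonneg
            ((ae_restrict_iff' measurableSet_Ioc).2 (Filter.Eventually.of_forall (hpos β hβ)))
            ((hcont β).const_mul _).integrableOn_Ioc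
            ((ae_restrict_iff' measurableSet_Ioc).2 (Filter.Eventually.of_forall fun α hα => ?_))
          have hpow : (L + β - α) ^ (1 - p) ≤ ε * jap (β - α) ^ (-h) := by
            have := add_rpow_le_rpow_mul_jap_rpow hL1 (sub_nonneg.2 hα.2)
              (by linarith : 0 ≤ h) hh2.le
            rwa [neg_sub, ← add_sub_assoc] at this
          calc (L + β - α) ^ (1 - p) * jap α ^ (-h) * Real.cosh (m - β) ^ (-(1 / 2) : ℝ)
              ≤ ε * jap (β - α) ^ (-h) * jap α ^ (-h) * (C * jap (m - β) ^ (-h)) :=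
                mul_le_mul (mul_le_mul_of_nonneg_right hpow (hnn _)) (hcosh _)
                  (Real.rpow_nonneg (Real.cosh_pos _).le _)
                  (mul_nonneg (mul_nonneg hε (hnn _)) (hnn _))
            _ = ε * C * jap (m - β) ^ (-h) * (jap (β - α) ^ (-h) * jap α ^ (-h)) := by ring
      _ ≤ ε * C * jap (m - β) ^ (-h) * (K * jap β ^ (-h)) := by
          rw [intervalIntegral.integral_const_mul]
          exact mul_le_mul_of_nonneg_left (hconv β (-β) β (by linarith))
            (mul_nonneg (by positivity) (hnn _))
      _ = ε * C * K * (jap (m - β) ^ (-h) * jap β ^ (-h)) := by ring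
  calc (∫ β in (0 : ℝ)..(m - 1), ∫ α in (-β)..β,
        (L + β - α) ^ (1 - p) * jap α ^ (-h) * Real.cosh (m - β) ^ (-(1 / 2) : ℝ))
      ≤ ∫ β in (0 : ℝ)..(m - 1), ε * C * K * (jap (m - β) ^ (-h) * jap β ^ (-h)) := by
        rw [integral_of_le (by linarith), integral_of_le (by linarith)]
        refine integral_mono_of_nonneg
          ((ae_restrict_iff' measurableSet_Ioc).2 (Filter.Eventually.of_forall fun β hβ => ?_))
          ((hcont m).const_mul _).integrableOn_Ioc
          ((ae_restrict_iff' measurableSet_Ioc).2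
            (Filter.Eventually.of_forall fun β hβ => hinner β hβ.1.le))
        have hβ0 : -β ≤ β := by linarith [hβ.1]
        simp only [Pi.zero_apply, integral_of_le hβ0]
        exact setIntegral_nonneg measurableSet_Ioc (hpos β hβ.1.le)
    _ ≤ ε * C * K * (K * jap m ^ (-h)) := by
        rw [intervalIntegral.integral_const_mul]
        exact mul_le_mul_of_nonneg_left (hconv m 0 (m - 1) (by linarith)) (by positivity)
    _ = ε * (C * K * K) * jap m ^ (-h) := by ring
    _ ≤ c * jap m ^ (-h) := mul_le_mul_of_nonneg_right hεc (hnn m)
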